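/- In k(X), with f_i = (τ*)^i(f), the following two identities hold: f₃ − 3f₂ + 3f₁ − f₀ + 6(f₀f₂ − 2f₀f₃ + f₁f₃) = 0, and f₅ − 5f₄ + 10f₃ − 10f₂ + 5f₁ − f₀ + 40(f₀f₂f₄ − 3f₀f₂f₅ + 3f₀f₃f₅ − f₁f₃f₅) = 0. -/

import Mathlib

set_option maxHeartbeats 1000000
set_option synthInstance.maxHeartbeats 1000000

noncomputable section

open MvPolynomial

variable (k : Type*) [Field k]

/-- The polynomial ring k[w,x,y,z], with w,x,y,z the variables indexed by 0,1,2,3. -/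
abbrev conePoly := MvPolynomial (Fin 4) k

/-- The relation xz − y². -/
def coneRel : conePoly k := X 1 * X 3 - X 2 ^ 2

/-- The ideal (xz − y²). -/
def coneIdeal : Ideal (conePoly k) := Ideal.span {coneRel k}

/-- The coordinate ring A = k[w,x,y,z]/(xz − y²) of the affine cone. -/
abbrev coneRing := conePoly k ⧸ coneIdeal k

/-- The substitution w ↦ w − 2x + 2z, x ↦ z, y ↦ −y − 2z, z ↦ x + 4y + 4z. -/
def tauSub : Fin 4 → conePoly k :=
  ![X 0 - 2 * X 1 + 2 * X 3, X 3, - X 2 - 2 * X 3, X 1 + 4 * X 2 + 4 * X 3]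

/-- The inverse substitution. -/
def tauInvSub : Fin 4 → conePoly k :=
  ![X 0 + 6 * X 1 + 8 * X 2 + 2 * X 3, 4 * X 1 + 4 * X 2 + X 3, - (2 * X 1) - X 2, X 1]

/-- The substitution τ* as an algebra automorphism of k[w,x,y,z]. -/
def tauPoly : conePoly k ≃ₐ[k] conePoly k :=
  AlgEquiv.ofAlgHom (aeval (tauSub k)) (aeval (tauInvSub k))
    (by
      apply MvPolynomial.algHom_ext
      intro i
      fin_cases i <;> simp [tauSub, tauInvSub, map_ofNat] <;> ring)
    (by
      apply MvPolynomial.algHom_ext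
      intro i
      fin_cases i <;> simp [tauSub, tauInvSub, map_ofNat] <;> ring)

lemma tauPoly_coneRel : tauPoly k (coneRel k) = coneRel k := by
  show aeval (tauSub k) (coneRel k) = coneRel k
  simp only [coneRel, tauSub, Matrix.cons_val_zero, Matrix.cons_val_one, Matrix.head_cons,
    Matrix.cons_val_two, Matrix.tail_cons, Matrix.cons_val_three,
    map_add, map_sub, map_mul, map_neg, map_ofNat, map_pow, aeval_X]
  ring

lemma coneIdeal_eq_map :
    coneIdeal k = (coneIdeal k).map (tauPoly k : conePoly k →+* conePoly k) := by
  have h : (tauPoly k : conePoly k →+* conePoly k) (coneRel k) = coneRel k := tauPoly_coneRel k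
  rw [coneIdeal, Ideal.map_span, Set.image_singleton, h]

/-- The automorphism τ* of A = k[w,x,y,z]/(xz − y²) induced by the substitution. -/
def tauCone : coneRing k ≃ₐ[k] coneRing k :=
  Ideal.quotientEquivAlg (coneIdeal k) (coneIdeal k) (tauPoly k) (coneIdeal_eq_map k)

/-- k(X), the fraction field of A. -/
abbrev coneField := FractionRing (coneRing k)

/-- The automorphism τ* of k(X) induced by τ*. -/
def tauFrac :=
  IsFractionRing.algEquivOfAlgEquiv (R := k) (K := coneField k) (L := coneField k) (tauCone k)

/-- The images of the coordinates w, x, y, z in k(X). -/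
def varK (i : Fin 4) : coneField k :=
  algebraMap (coneRing k) (coneField k) (Ideal.Quotient.mk (coneIdeal k) (X i))

variable [IsDomain (coneRing k)]

/-- The rational function f = (w + 12x + 22y + 8z)/(12x + 6y) ∈ k(X). -/
def fRat : coneField k :=
  (varK k 0 + 12 * varK k 1 + 22 * varK k 2 + 8 * varK k 3) /
    (12 * varK k 1 + 6 * varK k 2)

/-- fᵢ = (τ*)^i (f). -/
def fIter (i : ℕ) : coneField k := ((tauFrac k) ^ i) (fRat k)

end

section Coordinates

open MvPolynomial

variable (k : Type*) [Field k]

lemma tauFrac_varK (i : Fin 4) :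
    tauFrac k (varK k i) =
      algebraMap (coneRing k) (coneField k) (Ideal.Quotient.mk (coneIdeal k) (tauSub k i)) := by
  have h : tauPoly k (X i) = tauSub k i := aeval_X (tauSub k) i
  rw [← h]
  exact IsFractionRing.algEquivOfAlgEquiv_algebraMap (tauCone k) _

lemma tauFrac_varK_zero :
    tauFrac k (varK k 0) = varK k 0 - 2 * varK k 1 + 2 * varK k 3 := by
  rw [tauFrac_varK]
  simp [tauSub, varK, map_ofNat (Ideal.Quotient.mk (coneIdeal k)),
    map_ofNat (algebraMap (coneRing k) (coneField k))]

lemma tauFrac_varK_one : tauFrac k (varK k 1) = varK k 3 := by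
  rw [tauFrac_varK]
  simp [tauSub, varK]

lemma tauFrac_varK_two : tauFrac k (varK k 2) = -varK k 2 - 2 * varK k 3 := by
  rw [tauFrac_varK]
  simp [tauSub, varK, map_ofNat (Ideal.Quotient.mk (coneIdeal k)),
    map_ofNat (algebraMap (coneRing k) (coneField k))]

lemma tauFrac_varK_three :
    tauFrac k (varK k 3) = varK k 1 + 4 * varK k 2 + 4 * varK k 3 := by
  rw [tauFrac_varK]
  simp [tauSub, varK, map_ofNat (Ideal.Quotient.mk (coneIdeal k)),
    map_ofNat (algebraMap (coneRing k) (coneField k))]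

lemma varK_one_mul_varK_three : varK k 1 * varK k 3 = varK k 2 ^ 2 := by
  have h : Ideal.Quotient.mk (coneIdeal k) (X 1 * X 3) =
      Ideal.Quotient.mk (coneIdeal k) (X 2 ^ 2) :=
    Ideal.Quotient.eq.2 (Ideal.subset_span rfl)
  simpa [varK] using congrArg (algebraMap (coneRing k) (coneField k)) h

/-- A linear form in `x` and `y` that does not vanish at the point `(0, 4, -6, 9)` of the cone is nonzero
in the function field. -/
lemma linearForm_varK_ne_zero (a b : ℤ) (h : ((4 * a - 6 * b : ℤ) : k) ≠ 0) :
    a * varK k 1 + b * varK k 2 ≠ 0 := by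
  intro h0
  let p : Fin 4 → k := ![0, 4, -6, 9]
  have hp : ∀ q ∈ coneIdeal k, aeval p q = 0 := by
    have : coneIdeal k ≤ RingHom.ker (aeval p : conePoly k →ₐ[k] k) := by
      rw [coneIdeal, Ideal.span_singleton_le_iff_mem, RingHom.mem_ker]
      simp [coneRel, p]
      norm_num
    exact fun q hq => this hq
  have hq : algebraMap (coneRing k) (coneField k)
      (Ideal.Quotient.mk (coneIdeal k) ((a : conePoly k) * X 1 + (b : conePoly k) * X 2)) = 0 := by
    simpa [varK] using h0
  have hmem := Ideal.Quotient.eq_zero_iff_mem.1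
    ((map_eq_zero_iff _ (IsFractionRing.injective (coneRing k) (coneField k))).1 hq)
  apply h
  have := hp _ hmem
  simp [p] at this
  push_cast
  linear_combination this

variable [IsDomain (coneRing k)]

lemma fIter_succ (i : ℕ) : fIter k (i + 1) = tauFrac k (fIter k i) := by
  rw [fIter, fIter, pow_succ', AlgEquiv.mul_apply]

lemma fIter_eq (i : ℕ) :
    fIter k i =
      (varK k 0 + (12 - 6 * i) * varK k 1 + (22 - 12 * i) * varK k 2 + (8 - 6 * i) * varK k 3) /
        (6 * ((i - 1) * (i - 2) * varK k 1 + (2 * i ^ 2 - 4 * i + 1) * varK k 2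
          + i * (i - 1) * varK k 3)) := by
  induction i with
  | zero =>
    simp only [fIter, fRat, pow_zero, AlgEquiv.one_apply]
    congr 1 <;> push_cast <;> ring
  | succ i ih =>
    rw [fIter_succ, ih]
    simp only [map_div₀, map_add, map_sub, map_mul, map_pow, map_ofNat, map_natCast, map_one,
      tauFrac_varK_zero, tauFrac_varK_one, tauFrac_varK_two, tauFrac_varK_three]
    congr 1 <;> push_cast <;> ring

/-- On the cone `xz = y²` the denominator of `fᵢ` splits into linear forms; here it is written
in the affine coordinates `v = w / x` and `r = y / x`. -/
lemma fIter_eq_affine (i : ℕ) (hx : varK k 1 ≠ 0) :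
    fIter k i =
      (varK k 0 / varK k 1 + (12 - 6 * i) + (22 - 12 * i) * (varK k 2 / varK k 1)
          + (8 - 6 * i) * (varK k 2 / varK k 1) ^ 2) /
        (6 * (((i - 1) + i * (varK k 2 / varK k 1)) *
          ((i - 2) + (i - 1) * (varK k 2 / varK k 1)))) := by
  have hz : varK k 3 = varK k 1 * (varK k 2 / varK k 1) ^ 2 := by
    field_simp
    linear_combination varK_one_mul_varK_three k
  have hw : varK k 0 = varK k 1 * (varK k 0 / varK k 1) := by field_simp
  have hy : varK k 2 = varK k 1 * (varK k 2 / varK k 1) := by field_simp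
  rw [fIter_eq]
  generalize varK k 0 / varK k 1 = v at *
  generalize varK k 2 / varK k 1 = r at *
  rw [hz, hw, hy]
  conv_rhs => rw [← mul_div_mul_left _ _ hx]
  congr 1 <;> ring

end Coordinates

/-- The two identities for the sequence `(v + 12 - 6i + (22 - 12i)r + (8 - 6i)r²) / (6 Lᵢ Lᵢ₋₁)`
with `Lᵢ = (i - 1) + i r`. -/
lemma affine_identities {K : Type*} [Field K] [CharZero K] (v r : K) (f : ℕ → K)
    (hr : ∀ i : ℤ, -1 ≤ i → (i - 1) + i * r ≠ 0)
    (hf : ∀ i : ℕ, f i = (v + (12 - 6 * i) + (22 - 12 * i) * r + (8 - 6 * i) * r ^ 2) /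
      (6 * (((i - 1) + i * r) * ((i - 2) + (i - 1) * r)))) :
    (f 3 - 3 * f 2 + 3 * f 1 - f 0 + 6 * (f 0 * f 2 - 2 * (f 0 * f 3) + f 1 * f 3) = 0) ∧
      (f 5 - 5 * f 4 + 10 * f 3 - 10 * f 2 + 5 * f 1 - f 0 +
        40 * (f 0 * f 2 * f 4 - 3 * (f 0 * f 2 * f 5) +
          3 * (f 0 * f 3 * f 5) - f 1 * f 3 * f 5) = 0) := by
  have hm : 2 + r ≠ 0 := fun h => hr (-1) (by norm_num) (by push_cast; linear_combination -h)
  have h₁ : r ≠ 0 := fun h => hr 1 (by norm_num) (by push_cast; linear_combination h)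
  have h₂ : 1 + 2 * r ≠ 0 := fun h => hr 2 (by norm_num) (by push_cast; linear_combination h)
  have h₃ : 2 + 3 * r ≠ 0 := fun h => hr 3 (by norm_num) (by push_cast; linear_combination h)
  have h₄ : 3 + 4 * r ≠ 0 := fun h => hr 4 (by norm_num) (by push_cast; linear_combination h)
  have h₅ : 4 + 5 * r ≠ 0 := fun h => hr 5 (by norm_num) (by push_cast; linear_combination h)
  have e₀ : f 0 = (v + 12 + 22 * r + 8 * r ^ 2) / (6 * (2 + r)) := by
    rw [hf]; congr 1 <;> push_cast <;> ring
  have e₁ : f 1 = -(v + 6 + 10 * r + 2 * r ^ 2) / (6 * r) := by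
    rw [hf, neg_div, ← div_neg]; congr 1 <;> push_cast <;> ring
  have e₂ : f 2 = (v - 2 * r - 4 * r ^ 2) / (6 * (r * (1 + 2 * r))) := by
    rw [hf]; congr 1 <;> push_cast <;> ring
  have e₃ : f 3 = (v - 6 - 14 * r - 10 * r ^ 2) / (6 * ((1 + 2 * r) * (2 + 3 * r))) := by
    rw [hf]; congr 1 <;> push_cast <;> ring
  have e₄ : f 4 = (v - 12 - 26 * r - 16 * r ^ 2) / (6 * ((2 + 3 * r) * (3 + 4 * r))) := by
    rw [hf]; congr 1 <;> push_cast <;> ring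
  have e₅ : f 5 = (v - 18 - 38 * r - 22 * r ^ 2) / (6 * ((3 + 4 * r) * (4 + 5 * r))) := by
    rw [hf]; congr 1 <;> push_cast <;> ring
  rw [e₀, e₁, e₂, e₃, e₄, e₅]
  clear hr hf e₀ e₁ e₂ e₃ e₄ e₅
  generalize ha : 2 + r = a at *
  generalize hb : 1 + 2 * r = b at *
  generalize hc : 2 + 3 * r = c at *
  generalize hd : 3 + 4 * r = d at *
  generalize he : 4 + 5 * r = e at *
  constructor <;> field_simp <;> subst ha hb hc hd he <;> ring

/-!
Statement 7: In k(X), with fᵢ = (τ*)^i(f), the identities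
f₃ − 3f₂ + 3f₁ − f₀ + 6(f₀f₂ − 2f₀f₃ + f₁f₃) = 0 and
f₅ − 5f₄ + 10f₃ − 10f₂ + 5f₁ − f₀ + 40(f₀f₂f₄ − 3f₀f₂f₅ + 3f₀f₃f₅ − f₁f₃f₅) = 0 hold.
-/

theorem fIter_identities (k : Type*) [Field k] [CharZero k] [IsDomain (coneRing k)] :
    (fIter k 3 - 3 * fIter k 2 + 3 * fIter k 1 - fIter k 0 +
        6 * (fIter k 0 * fIter k 2 - 2 * (fIter k 0 * fIter k 3) + fIter k 1 * fIter k 3) = 0) ∧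
      (fIter k 5 - 5 * fIter k 4 + 10 * fIter k 3 - 10 * fIter k 2 + 5 * fIter k 1 - fIter k 0 +
        40 * (fIter k 0 * fIter k 2 * fIter k 4 - 3 * (fIter k 0 * fIter k 2 * fIter k 5) +
          3 * (fIter k 0 * fIter k 3 * fIter k 5) - fIter k 1 * fIter k 3 * fIter k 5) = 0) := by
  have hx : varK k 1 ≠ 0 := by
    simpa using linearForm_varK_ne_zero k 1 0 (by norm_num)
  have : CharZero (coneField k) :=
    charZero_of_injective_algebraMap (algebraMap k (coneField k)).injective
  refine affine_identities _ _ (fIter k) (fun i hi h => ?_) (fun i => fIter_eq_affine k i hx)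
  refine linearForm_varK_ne_zero k (i - 1) i (Int.cast_ne_zero.2 (by omega)) ?_
  field_simp at h
  push_cast
  linear_combination h
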